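/- arXiv:math/9807077 — 2 statements merged into one kernel-verified Lean document; each statement's English description precedes it below -/
import Mathlib

section
/- Let V be a vertex operator algebra and W a weak V-module. Then D(W) is a g(V)-submodule of the g(V)-module W*, and D(W) is a restricted g(V)-module (i.e., for every v ∈ V and α ∈ D(W), v*_m α = 0 for m sufficiently large). -/
noncomputable section

/-- The generalized binomial coefficient `C(m, i)` for `m ∈ ℤ`, `i ∈ ℕ`,
as a complex number: `m(m-1)⋯(m-i+1)/i!`. -/
def cchoose (m : ℤ) (i : ℕ) : ℂ :=
  (∏ j ∈ Finset.range i, ((m : ℂ) - (j : ℂ))) / (Nat.factorial i : ℂ)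

/-- A vertex operator algebra `V = ⊕ₙ V₍ₙ₎` over `ℂ`.  The vertex operator map is
recorded through its modes `op u n v = uₙ v` (so `Y(u,x)v = Σₙ uₙv x^{-n-1}`), with
vacuum `one`, conformal vector `omega` (with `L(k) = ω_{k+1}`), central charge `cc`,
weight grading `wtSpace` with projections `proj`.  The Jacobi identity is recorded in
the equivalent form of the Borcherds identity on modes. -/
structure VOA where
  carrier : Type
  [grp : AddCommGroup carrier]
  [mdl : Module ℂ carrier]
  op : carrier → ℤ → carrier → carrier
  one : carrier
  omega : carrier
  wtSpace : ℤ → Submodule ℂ carrier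
  proj : ℤ → carrier → carrier
  cc : ℂ
  op_linear_left : ∀ (n : ℤ) (w : carrier), IsLinearMap ℂ fun u => op u n w
  op_linear_right : ∀ (u : carrier) (n : ℤ), IsLinearMap ℂ (op u n)
  trunc : ∀ u v : carrier, ∃ N : ℤ, ∀ n : ℤ, N ≤ n → op u n v = 0
  one_op : ∀ (n : ℤ) (v : carrier), op one n v = if n = -1 then v else 0
  create_nonneg : ∀ (v : carrier) (n : ℤ), 0 ≤ n → op v n one = 0
  create : ∀ v : carrier, op v (-1) one = v
  borcherds : ∀ (u v w : carrier) (l m n : ℤ),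
    (∑ᶠ i : ℕ, cchoose m i • op (op u (l + (i : ℤ)) v) (m + n - (i : ℤ)) w)
      = ∑ᶠ i : ℕ, ((-1 : ℂ) ^ i * cchoose l i) •
          (op u (l + m - (i : ℤ)) (op v (n + (i : ℤ)) w)
            - ((-1 : ℂ) ^ l) • op v (l + n - (i : ℤ)) (op u (m + (i : ℤ)) w))
  proj_linear : ∀ n : ℤ, IsLinearMap ℂ (proj n)
  proj_mem : ∀ (n : ℤ) (v : carrier), proj n v ∈ wtSpace n
  proj_eq : ∀ n : ℤ, ∀ v ∈ wtSpace n, proj n v = v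
  proj_ne : ∀ m n : ℤ, m ≠ n → ∀ v ∈ wtSpace m, proj n v = 0
  proj_finite : ∀ v : carrier, (Function.support fun n => proj n v).Finite
  proj_sum : ∀ v : carrier, (∑ᶠ n : ℤ, proj n v) = v
  fd : ∀ n : ℤ, FiniteDimensional ℂ (wtSpace n)
  lower_trunc : ∃ N : ℤ, ∀ n : ℤ, n < N → wtSpace n = ⊥
  one_wt : one ∈ wtSpace 0
  omega_wt : omega ∈ wtSpace 2
  op_wt : ∀ k m n : ℤ, ∀ u ∈ wtSpace k, ∀ v ∈ wtSpace m, op u n v ∈ wtSpace (k + m - n - 1)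
  L_zero : ∀ n : ℤ, ∀ v ∈ wtSpace n, op omega 1 v = (n : ℂ) • v
  L_neg_one : ∀ (u : carrier) (n : ℤ) (w : carrier),
    op (op omega 0 u) n w = (-(n : ℂ)) • op u (n - 1) w
  virasoro : ∀ (m n : ℤ) (v : carrier),
    op omega (m + 1) (op omega (n + 1) v) - op omega (n + 1) (op omega (m + 1) v)
      = ((m : ℂ) - (n : ℂ)) • op omega (m + n + 1) v
        + (if m + n = 0 then (((m : ℂ) ^ 3 - (m : ℂ)) / 12) * cc else 0) • v

attribute [instance] VOA.grp VOA.mdl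

namespace VOA

variable (V : VOA)

/-- The Virasoro operator `L(k) = ω_{k+1}`. -/
def L (k : ℤ) (v : V.carrier) : V.carrier := V.op V.omega (k + 1) v

/-- The positive-weight part `V₊ = ⊕_{n ≥ 1} V₍ₙ₎`. -/
def pos : Submodule ℂ V.carrier := ⨆ (n : ℤ) (_ : 1 ≤ n), V.wtSpace n

/-- Zhu's subspace `C₂(V) = span{u₋₂v : u, v ∈ V}`. -/
def C2 : Submodule ℂ V.carrier :=
  Submodule.span ℂ {x : V.carrier | ∃ u v : V.carrier, x = V.op u (-2) v}

/-- The subspace `C₁(V) = span(v₋₁V₊ (v ∈ V₊) together with L(-1)V)`. -/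
def C1 : Submodule ℂ V.carrier :=
  Submodule.span ℂ
    ({x : V.carrier | ∃ u ∈ V.pos, ∃ v ∈ V.pos, x = V.op u (-1) v}
      ∪ {x : V.carrier | ∃ v : V.carrier, x = V.op V.omega 0 v})

/-- Iterated application of modes: `iterApply [(u¹,n₁),…,(uʳ,n_r)] w = u¹_{n₁} ⋯ uʳ_{n_r} w`. -/
def iterApply : List (V.carrier × ℤ) → V.carrier → V.carrier
  | [], w => w
  | p :: l, w => V.op p.1 p.2 (iterApply l w)

/-- `U ⊆ V` generates `V` as a vertex operator algebra:  `V` is linearly spanned by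
the elements `u¹_{n₁} ⋯ uʳ_{n_r} 1` with `uⁱ ∈ U`, `n_i ∈ ℤ`. -/
def generates (U : Set V.carrier) : Prop :=
  Submodule.span ℂ {x : V.carrier | ∃ l : List (V.carrier × ℤ),
    (∀ p ∈ l, p.1 ∈ U) ∧ x = V.iterApply l V.one} = ⊤

/-- `V` is finitely generated as a vertex operator algebra. -/
def FinitelyGenerated : Prop := ∃ S : Finset V.carrier, V.generates ↑S

end VOA

/-- A weak `V`-module: all axioms of a module (truncation, vacuum, Jacobi identity in
Borcherds form) except those involving gradings. -/
structure WeakModule (V : VOA) where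
  carrier : Type
  [grp : AddCommGroup carrier]
  [mdl : Module ℂ carrier]
  op : V.carrier → ℤ → carrier → carrier
  op_linear_left : ∀ (n : ℤ) (w : carrier), IsLinearMap ℂ fun u => op u n w
  op_linear_right : ∀ (u : V.carrier) (n : ℤ), IsLinearMap ℂ (op u n)
  trunc : ∀ (u : V.carrier) (w : carrier), ∃ N : ℤ, ∀ n : ℤ, N ≤ n → op u n w = 0
  one_op : ∀ (n : ℤ) (w : carrier), op V.one n w = if n = -1 then w else 0
  borcherds : ∀ (u v : V.carrier) (w : carrier) (l m n : ℤ),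
    (∑ᶠ i : ℕ, cchoose m i • op (V.op u (l + (i : ℤ)) v) (m + n - (i : ℤ)) w)
      = ∑ᶠ i : ℕ, ((-1 : ℂ) ^ i * cchoose l i) •
          (op u (l + m - (i : ℤ)) (op v (n + (i : ℤ)) w)
            - ((-1 : ℂ) ^ l) • op v (l + n - (i : ℤ)) (op u (m + (i : ℤ)) w))

attribute [instance] WeakModule.grp WeakModule.mdl

namespace WeakModule

variable {V : VOA} (W : WeakModule V)

/-- `L(0)` acting on a weak module, as a linear map. -/
def L0 : W.carrier →ₗ[ℂ] W.carrier := IsLinearMap.mk' _ (W.op_linear_right V.omega 1)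

/-- The `L(0)`-eigenspace of eigenvalue `h`. -/
def eig (h : ℂ) : Submodule ℂ W.carrier :=
  LinearMap.ker (W.L0 - h • (LinearMap.id : W.carrier →ₗ[ℂ] W.carrier))

/-- The coefficient `v*ₙ` of the adjoint vertex operator
`⟨Y*(v,x)α, w⟩ = ⟨α, Y(e^{xL(1)}(-x^{-2})^{L(0)}v, x^{-1})w⟩` acting on the full dual
space: for `v` homogeneous of weight `h`,
`(v*ₙ α)(w) = (-1)^h Σ_{i≥0} (1/i!) α((L(1)^i v)_{2h-n-i-2} w)`, extended to general
`v` via the weight-space projections. -/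
def dmode (v : V.carrier) (n : ℤ) (α : W.carrier → ℂ) (w : W.carrier) : ℂ :=
  ∑ᶠ h : ℤ, ∑ᶠ i : ℕ,
    ((-1 : ℂ) ^ h / (Nat.factorial i : ℂ)) *
      α (W.op ((V.L 1)^[i] (V.proj h v)) (2 * h - n - (i : ℤ) - 2) w)

/-- `D(W) ⊆ W*`: the linear functionals `α` on `W` such that for every `v ∈ V`,
`Y*(v,x)α ∈ W*((x))`, i.e. `v*ₙ α = 0` for `n` sufficiently large. -/
def DW : Set (W.carrier → ℂ) :=
  {α | IsLinearMap ℂ α ∧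
    ∀ v : V.carrier, ∃ N : ℤ, ∀ n : ℤ, N ≤ n → ∀ w : W.carrier, W.dmode v n α w = 0}

/-- A subspace stable under all modes of all vertex operators, i.e. a `V`-submodule. -/
def IsStable (S : Submodule ℂ W.carrier) : Prop :=
  ∀ (v : V.carrier) (n : ℤ), ∀ m ∈ S, W.op v n m ∈ S

/-- An irreducible (nonzero, no proper nonzero stable subspaces) `V`-submodule. -/
def IsIrreducibleSub (S : Submodule ℂ W.carrier) : Prop :=
  S ≠ ⊥ ∧ W.IsStable S ∧
    ∀ T : Submodule ℂ W.carrier, W.IsStable T → T ≤ S → T = ⊥ ∨ T = S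

/-- A stable subspace which is an ordinary module: `L(0)` acts semisimply on it with
finite-dimensional eigenspaces, and for each `h` the eigenvalues `h + m` do not occur
for `m` a sufficiently negative integer. -/
def IsOrdinarySub (S : Submodule ℂ W.carrier) : Prop :=
  S ≤ (⨆ h : ℂ, W.eig h ⊓ S) ∧ (∀ h : ℂ, FiniteDimensional ℂ ↥(W.eig h ⊓ S)) ∧
    ∀ h : ℂ, ∃ N : ℤ, ∀ m : ℤ, m ≤ N → W.eig (h + (m : ℂ)) ⊓ S = ⊥

/-- The weak module `W` is irreducible. -/
def IsIrreducible : Prop :=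
  (⊥ : Submodule ℂ W.carrier) ≠ ⊤ ∧
    ∀ S : Submodule ℂ W.carrier, W.IsStable S → S = ⊥ ∨ S = ⊤

/-- `Cₙ(W) = span{v₋ₙw : v ∈ V, w ∈ W}`. -/
def Cn (n : ℤ) : Submodule ℂ W.carrier :=
  Submodule.span ℂ {x : W.carrier | ∃ (v : V.carrier) (w : W.carrier), x = W.op v (-n) w}

/-- `B(W) = span(u₋₁W (u ∈ V₊) together with v₀W (v homogeneous, wt v ≥ 2))`. -/
def BW : Submodule ℂ W.carrier :=
  Submodule.span ℂ
    ({x : W.carrier | ∃ v ∈ V.pos, ∃ w : W.carrier, x = W.op v (-1) w}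
      ∪ {x : W.carrier | ∃ k : ℤ, 2 ≤ k ∧ ∃ v ∈ V.wtSpace k, ∃ w : W.carrier, x = W.op v 0 w})

/-- Zhu's subspace `O(W) = span{Σ_{i≥0} C(wt v, i) v_{i-2} w}` so that `A(W) = W/O(W)`. -/
def OW : Submodule ℂ W.carrier :=
  Submodule.span ℂ
    {x : W.carrier | ∃ (k : ℤ) (v : V.carrier), v ∈ V.wtSpace k ∧
      ∃ w : W.carrier, x = ∑ᶠ i : ℕ, cchoose k i • W.op v ((i : ℤ) - 2) w}

/-- A subspace `T ⊇ O(W)` of `W` is closed under the Frenkel–Zhu left and right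
`A(V)`-actions `v * w = Σᵢ C(wt v, i) v_{i-1} w` and `w * v = Σᵢ C(wt v - 1, i) v_{i-1} w`;
for `T ⊇ O(W)` this expresses that `T/O(W)` is an `A(V)`-sub-bimodule of `A(W)`. -/
def BimoduleClosed (T : Submodule ℂ W.carrier) : Prop :=
  ∀ k : ℤ, ∀ v ∈ V.wtSpace k, ∀ w ∈ T,
    (∑ᶠ i : ℕ, cchoose k i • W.op v ((i : ℤ) - 1) w) ∈ T ∧
    (∑ᶠ i : ℕ, cchoose (k - 1) i • W.op v ((i : ℤ) - 1) w) ∈ T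

/-- Equivalence (isomorphism) of weak modules. -/
def Equiv (M N : WeakModule V) : Prop :=
  ∃ e : M.carrier ≃ₗ[ℂ] N.carrier,
    ∀ (v : V.carrier) (n : ℤ) (w : M.carrier), e (M.op v n w) = N.op v n (e w)

end WeakModule

/-- `V` is of class 𝒜: `L(0)` acts semisimply on every weak `V`-module. -/
def VOA.classA (V : VOA) : Prop :=
  ∀ M : WeakModule V, (⨆ h : ℂ, M.eig h) = ⊤

/-- `V` is regular: every weak `V`-module is a direct sum of irreducible ordinary
`V`-modules. -/
def VOA.regular (V : VOA) : Prop :=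
  ∀ M : WeakModule V, ∃ (ι : Type) (S : ι → Submodule ℂ M.carrier),
    (∀ i, M.IsIrreducibleSub (S i) ∧ M.IsOrdinarySub (S i)) ∧
    (∀ i, Disjoint (S i) (⨆ (j : ι) (_ : j ≠ i), S j)) ∧ (⨆ i, S i) = ⊤

/-- A generalized `V`-module: a weak module with a semisimple `L(0)`-action, graded by
the `L(0)`-eigenvalues, with weight-space projections `projW`. -/
structure GenModule (V : VOA) extends WeakModule V where
  wt : ℂ → Submodule ℂ carrier
  projW : ℂ → carrier → carrier
  projW_linear : ∀ h : ℂ, IsLinearMap ℂ (projW h)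
  projW_mem : ∀ (h : ℂ) (w : carrier), projW h w ∈ wt h
  projW_eq : ∀ h : ℂ, ∀ w ∈ wt h, projW h w = w
  projW_ne : ∀ g h : ℂ, g ≠ h → ∀ w ∈ wt g, projW h w = 0
  projW_finite : ∀ w : carrier, (Function.support fun h => projW h w).Finite
  projW_sum : ∀ w : carrier, (∑ᶠ h : ℂ, projW h w) = w
  wt_L0 : ∀ h : ℂ, ∀ w ∈ wt h, op V.omega 1 w = h • w
  wt_op : ∀ k : ℤ, ∀ v ∈ V.wtSpace k, ∀ (h : ℂ) (n : ℤ), ∀ w ∈ wt h,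
    op v n w ∈ wt (h + (k : ℂ) - (n : ℂ) - 1)

/-- An ordinary `V`-module: a generalized module whose weight spaces are
finite-dimensional and whose weights are truncated from below in each coset `h + ℤ`. -/
structure OrdModule (V : VOA) extends GenModule V where
  wt_fd : ∀ h : ℂ, FiniteDimensional ℂ ↥(wt h)
  wt_lower : ∀ h : ℂ, ∃ N : ℤ, ∀ m : ℤ, m ≤ N → wt (h + (m : ℂ)) = ⊥

namespace GenModule

variable {V : VOA} (W : GenModule V)

/-- `W₊ = ⊕_{Re h > 0} W₍ₕ₎`. -/
def posW : Submodule ℂ W.carrier := ⨆ (h : ℂ) (_ : 0 < h.re), W.wt h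

/-- `C₁(W) = span(v₋₁W₊ (v ∈ V₊) together with L(-1)W)`. -/
def C1W : Submodule ℂ W.carrier :=
  Submodule.span ℂ
    ({x : W.carrier | ∃ v ∈ V.pos, ∃ w ∈ W.posW, x = W.op v (-1) w}
      ∪ {x : W.carrier | ∃ w : W.carrier, x = W.op V.omega 0 w})

/-- The restricted dual `W' = ⊕ₕ W₍ₕ₎* ⊆ W*`: the linear functionals vanishing on all
but finitely many weight spaces. -/
def restrictedDual : Set (W.carrier → ℂ) :=
  {α | IsLinearMap ℂ α ∧ {h : ℂ | ∃ w ∈ W.wt h, α w ≠ 0}.Finite}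

end GenModule

/-- `D(W)⁰`: the sum of the `L(0)`-eigenspaces of the weak module `D(W) ⊆ W*`, where
`L*(0) = ω*₁` acts on `α ∈ W*` by `(L*(0)α)(w) = α(L(0)w)`. -/
def OrdModule.DW0 {V : VOA} (W : OrdModule V) : Set (W.carrier → ℂ) :=
  {α | ∃ (S : Finset ℂ) (f : ℂ → (W.carrier → ℂ)),
    (∀ h ∈ S, f h ∈ W.toWeakModule.DW ∧
      ∀ w : W.carrier, f h (W.op V.omega 1 w) = h * f h w) ∧
    α = ∑ h ∈ S, f h}

/-- An ℕ-gradable weak `V`-module: a weak module with an ℕ-grading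
`W = ⊕_{n∈ℕ} W(n)` with `v_m W(n) ⊆ W(wt v + n - m - 1)` (graded pieces of negative
index are zero). -/
structure NGradedModule (V : VOA) extends WeakModule V where
  gr : ℤ → Submodule ℂ carrier
  gr_neg : ∀ n : ℤ, n < 0 → gr n = ⊥
  gr_sup : (⨆ n : ℤ, gr n) = ⊤
  gr_indep : ∀ n : ℤ, Disjoint (gr n) (⨆ (m : ℤ) (_ : m ≠ n), gr m)
  gr_op : ∀ k : ℤ, ∀ v ∈ V.wtSpace k, ∀ m n : ℤ, ∀ w ∈ gr n,
    op v m w ∈ gr (k + n - m - 1)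

/-- An intertwining operator of type `(W₃; W₁ W₂)` in the sense of
Frenkel–Huang–Lepowsky, recorded through its complex-indexed modes
`I w₁ h w₂ = (w₁)ₕ w₂` (so `Y(w₁,x)w₂ = Σ_{h∈ℂ} (w₁)ₕ w₂ x^{-h-1}`):
linearity, truncation, the `L(-1)`-derivative property, and the Jacobi identity in
component (Borcherds) form. -/
def IsIntertwiner {V : VOA} (W1 W2 W3 : OrdModule V)
    (I : W1.carrier → ℂ → W2.carrier → W3.carrier) : Prop :=
  (∀ (h : ℂ) (w2 : W2.carrier), IsLinearMap ℂ fun w1 => I w1 h w2) ∧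
  (∀ (w1 : W1.carrier) (h : ℂ), IsLinearMap ℂ (I w1 h)) ∧
  (∀ (w1 : W1.carrier) (w2 : W2.carrier) (h : ℂ),
    ∃ N : ℤ, ∀ n : ℤ, N ≤ n → I w1 (h + (n : ℂ)) w2 = 0) ∧
  (∀ (w1 : W1.carrier) (h : ℂ) (w2 : W2.carrier),
    I (W1.op V.omega 0 w1) h w2 = (-h) • I w1 (h - 1) w2) ∧
  (∀ (u : V.carrier) (w1 : W1.carrier) (w2 : W2.carrier) (l m : ℤ) (h : ℂ),
    (∑ᶠ i : ℕ, cchoose m i • I (W1.op u (l + (i : ℤ)) w1) ((m : ℂ) + h - (i : ℂ)) w2)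
      = ∑ᶠ i : ℕ, ((-1 : ℂ) ^ i * cchoose l i) •
          (W3.op u (l + m - (i : ℤ)) (I w1 (h + (i : ℂ)) w2)
            - ((-1 : ℂ) ^ l) • I w1 ((l : ℂ) + h - (i : ℂ)) (W2.op u (m + (i : ℤ)) w2)))

/-- The fusion rule `dim I(W₃; W₁W₂)` is finite: the space of intertwining operators of
the indicated type is finite-dimensional. -/
def FusionFinite {V : VOA} (W1 W2 W3 : OrdModule V) : Prop :=
  FiniteDimensional ℂ
    ↥(Submodule.span ℂ {I : W1.carrier → ℂ → W2.carrier → W3.carrier |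
        IsIntertwiner W1 W2 W3 I})

end

/-!
The adjoint modes involve the correction `e^{xL(1)}`, but since `L(1)` lowers weights and the
weights of `V` are bounded below, for `v` of weight `h` the functional `v*ₙ φ` differs from
`± φ ∘ v_{2h-n-2}` only by a combination of the `φ ∘ (L(1)^i v)_{2h-n-2-i}`, `i ≥ 1`, where
`L(1)^i v` is killed by a smaller power of `L(1)`. By induction on that power, `D(W)` consists of
the functionals `φ` such that, for every `v`, `φ ∘ vₙ = 0` when `n` is sufficiently negative. This
description is visibly linear, and it is stable under `φ ↦ φ ∘ u_m` by the commutator formula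
`[u_m, vₙ] = Σᵢ C(m, i) (uᵢv)_{m+n-i}`, a finite sum in which `m + n - i → -∞` with `n`.
-/

open Filter Module

theorem tendsto_const_sub_atTop_atBot {G : Type*} [AddCommGroup G] [PartialOrder G]
    [IsOrderedAddMonoid G] (c : G) : Tendsto (fun x => c - x) atTop atBot := by
  simpa only [sub_eq_add_neg] using tendsto_atBot_add_const_left _ c tendsto_neg_atTop_atBot

theorem tendsto_const_sub_atBot_atTop {G : Type*} [AddCommGroup G] [PartialOrder G]
    [IsOrderedAddMonoid G] (c : G) : Tendsto (fun x => c - x) atBot atTop := by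
  simpa only [sub_eq_add_neg] using tendsto_atTop_add_const_left _ c tendsto_neg_atBot_atTop

theorem cchoose_zero_right (m : ℤ) : cchoose m 0 = 1 := by
  simp [cchoose]

theorem cchoose_zero_succ (i : ℕ) : cchoose 0 (i + 1) = 0 := by
  simp [cchoose, Finset.prod_range_succ']

namespace VOA

variable {V : VOA}

theorem iSup_wtSpace : ⨆ h, V.wtSpace h = ⊤ := by
  refine eq_top_iff.2 fun v _ => ?_
  rw [← V.proj_sum v, finsum_eq_sum _ (V.proj_finite v)]
  exact Submodule.sum_mem _ fun h _ => Submodule.mem_iSup_of_mem h (V.proj_mem h v)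

variable (V) in
/-- The Virasoro operator `L(k)` on `V` as a linear endomorphism, so that its powers are taken
in `Module.End`. -/
def endL (k : ℤ) : End ℂ V.carrier :=
  IsLinearMap.mk' (V.L k) (V.op_linear_right V.omega (k + 1))

theorem iterate_L_eq_endL_pow (k : ℤ) (i : ℕ) : (V.L k)^[i] = ⇑(V.endL k ^ i) :=
  (End.coe_pow (V.endL k) i).symm

theorem endL_mem_wtSpace {h k : ℤ} {v : V.carrier} (hv : v ∈ V.wtSpace h) :
    V.endL k v ∈ V.wtSpace (h - k) := by
  have hwt : 2 + h - (k + 1) - 1 = h - k := by ring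
  exact hwt ▸ V.op_wt 2 h (k + 1) V.omega V.omega_wt v hv

theorem endL_pow_mem_wtSpace {h k : ℤ} {v : V.carrier} (hv : v ∈ V.wtSpace h) (i : ℕ) :
    (V.endL k ^ i) v ∈ V.wtSpace (h - i * k) := by
  induction i with
  | zero => simpa using hv
  | succ i ih =>
    have hwt : h - i * k - k = h - (i + 1 : ℕ) * k := by push_cast; ring
    rw [pow_succ', End.mul_apply, ← hwt]
    exact endL_mem_wtSpace ih

theorem exists_endL_pow_eq_zero {h k : ℤ} (hk : 0 < k) {v : V.carrier} (hv : v ∈ V.wtSpace h) :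
    ∃ r : ℕ, (V.endL k ^ r) v = 0 := by
  obtain ⟨N, hN⟩ := V.lower_trunc
  let r := (h - N + 1).toNat
  have hr : h - r * k < N := by
    have hle : h - N + 1 ≤ r := Int.self_le_toNat _
    nlinarith
  refine ⟨r, ?_⟩
  simpa only [hN _ hr, Submodule.mem_bot] using endL_pow_mem_wtSpace (k := k) hv r

end VOA

namespace WeakModule

variable {V : VOA} {W : WeakModule V}

variable (W) in
/-- The mode `v ↦ vₙ` of the vertex operators on `W`, bundled as a linear map so that functionals
can be composed with it. -/
def mode (n : ℤ) : V.carrier →ₗ[ℂ] End ℂ W.carrier :=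
  LinearMap.mk₂ ℂ (fun v w => W.op v n w)
    (fun u v w => (W.op_linear_left n w).map_add u v)
    (fun c v w => (W.op_linear_left n w).map_smul c v)
    (fun v => (W.op_linear_right v n).map_add)
    (fun c v => (W.op_linear_right v n).map_smul c)

theorem op_eq_mode (v : V.carrier) (n : ℤ) (w : W.carrier) : W.op v n w = W.mode n v w :=
  rfl

theorem lie_mode_eq_sum {u v : V.carrier} {r : ℕ} (hr : ∀ i : ℕ, r ≤ i → V.op u i v = 0)
    (m n : ℤ) :
    ⁅W.mode m u, W.mode n v⁆ =
      ∑ i ∈ Finset.range r, cchoose m i • W.mode (m + n - i) (V.op u i v) := by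
  ext w
  have hborcherds := W.borcherds u v w 0 m n
  have hleft : (Function.support fun i : ℕ =>
      cchoose m i • W.mode (m + n - i) (V.op u (0 + i) v) w) ⊆ Finset.range r := by
    refine Function.support_subset_iff'.2 fun i hi => ?_
    rw [zero_add, hr i (by simpa using hi), map_zero, LinearMap.zero_apply, smul_zero]
  have hright : ∀ i : ℕ, i ≠ 0 → ((-1 : ℂ) ^ i * cchoose 0 i) •
      (W.mode (0 + m - i) u (W.mode (n + i) v w) -
        ((-1 : ℂ) ^ (0 : ℤ)) • W.mode (0 + n - i) v (W.mode (m + i) u w)) = 0 := by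
    rintro (_ | i) hi
    · exact absurd rfl hi
    · rw [cchoose_zero_succ, mul_zero, zero_smul]
  simp only [op_eq_mode] at hborcherds
  rw [finsum_eq_sum_of_support_subset _ hleft, finsum_eq_single _ 0 hright] at hborcherds
  simpa [cchoose_zero_right, Ring.lie_def] using hborcherds.symm

section Adjoint

variable {φ : Dual ℂ W.carrier}

theorem dmode_apply_of_mem_wtSpace {h : ℤ} {v : V.carrier} (hv : v ∈ V.wtSpace h) (n : ℤ)
    (w : W.carrier) :
    W.dmode v n φ w = ∑ᶠ i : ℕ, ((-1 : ℂ) ^ h / (i.factorial : ℂ)) *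
      φ (W.mode (2 * h - n - i - 2) ((V.endL 1 ^ i) v) w) := by
  simp only [dmode, VOA.iterate_L_eq_endL_pow, op_eq_mode]
  rw [finsum_eq_single _ h fun g hg => ?_, V.proj_eq h v hv]
  simp [V.proj_ne h g hg.symm v hv]

theorem dmode_of_mem_wtSpace {h : ℤ} {v : V.carrier} (hv : v ∈ V.wtSpace h) {r : ℕ}
    (hr : (V.endL 1 ^ r) v = 0) (n : ℤ) :
    W.dmode v n φ = ⇑(∑ i ∈ Finset.range r, ((-1 : ℂ) ^ h / (i.factorial : ℂ)) •
      φ ∘ₗ W.mode (2 * h - n - i - 2) ((V.endL 1 ^ i) v)) := by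
  ext w
  rw [dmode_apply_of_mem_wtSpace hv, finsum_eq_sum_of_support_subset (s := Finset.range r)]
  · simp
  · refine Function.support_subset_iff'.2 fun i hi => ?_
    rw [End.pow_map_zero_of_le (by simpa using hi) hr]
    simp

theorem dmode_zero_left (n : ℤ) : W.dmode 0 n φ = 0 := by
  rw [dmode_of_mem_wtSpace (zero_mem (V.wtSpace 0)) (r := 0) (map_zero _), Finset.sum_range_zero,
    LinearMap.coe_zero_iff]

theorem dmode_eq_sum_proj (v : V.carrier) (n : ℤ) :
    W.dmode v n φ = ∑ h ∈ (V.proj_finite v).toFinset, W.dmode (V.proj h v) n φ := by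
  ext w
  have hproj : W.dmode v n φ w = ∑ᶠ h, W.dmode (V.proj h v) n φ w := by
    refine finsum_congr fun h => ?_
    simp only [dmode_apply_of_mem_wtSpace (V.proj_mem h v), VOA.iterate_L_eq_endL_pow, op_eq_mode]
  rw [hproj, Finset.sum_apply, finsum_eq_sum_of_support_subset]
  refine Function.support_subset_iff'.2 fun h hh => ?_
  rw [show V.proj h v = 0 by simpa using hh, dmode_zero_left, Pi.zero_apply]

variable (φ) in
/-- The vectors `v ∈ V` with `φ ∘ vₙ = 0` for all sufficiently negative `n`. They form a subspace,
so this condition need only be tested on homogeneous `v`. -/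
def truncation : Submodule ℂ V.carrier where
  carrier := {v | ∀ᶠ n in atBot, φ ∘ₗ W.mode n v = 0}
  zero_mem' := by simp
  add_mem' hu hv := by
    filter_upwards [hu, hv] with n hun hvn
    rw [map_add, LinearMap.comp_add, hun, hvn, add_zero]
  smul_mem' c v hv := by
    filter_upwards [hv] with n hn
    rw [map_smul, LinearMap.comp_smul, hn, smul_zero]

theorem mem_truncation_of_endL_pow_eq_zero
    (hφ : ∀ v : V.carrier, ∀ᶠ n in atTop, W.dmode v n φ = 0) {r : ℕ} {h : ℤ} {v : V.carrier}
    (hv : v ∈ V.wtSpace h) (hr : (V.endL 1 ^ r) v = 0) : v ∈ truncation φ := by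
  induction r generalizing h v with
  | zero =>
    rw [pow_zero, End.one_apply] at hr
    exact hr ▸ zero_mem _
  | succ r ih =>
    have hcorrection : ∀ᶠ n in atBot, ∀ i ∈ Finset.range r,
        φ ∘ₗ W.mode (n - (i + 1 : ℕ)) ((V.endL 1 ^ (i + 1)) v) = 0 := by
      refine (eventually_all_finset _).2 fun i _ => ?_
      have hmem : (V.endL 1 ^ (i + 1)) v ∈ truncation φ := by
        refine ih (VOA.endL_pow_mem_wtSpace hv (i + 1)) ?_
        rw [← End.mul_apply, ← pow_add]
        exact End.pow_map_zero_of_le (by omega) hr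
      exact (tendsto_atBot_add_const_right _ _ tendsto_id).eventually hmem
    have hdmode := (tendsto_const_sub_atBot_atTop (2 * h - 2)).eventually (hφ v)
    filter_upwards [hcorrection, hdmode] with n hn hzero
    have hindex (i : ℕ) : 2 * h - (2 * h - 2 - n) - i - 2 = n - i := by ring
    rw [dmode_of_mem_wtSpace hv hr, LinearMap.coe_zero_iff] at hzero
    simp only [hindex] at hzero
    rw [Finset.sum_range_succ', Finset.sum_eq_zero fun i hi => by rw [hn i hi, smul_zero]] at hzero
    simpa [zpow_ne_zero] using hzero

theorem eventually_dmode_eq_zero_of_mem_wtSpace (hφ : truncation φ = ⊤) {h : ℤ}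
    {v : V.carrier} (hv : v ∈ V.wtSpace h) : ∀ᶠ n in atTop, W.dmode v n φ = 0 := by
  obtain ⟨r, hr⟩ := VOA.exists_endL_pow_eq_zero one_pos hv
  have hterms : ∀ᶠ n : ℤ in atTop, ∀ i ∈ Finset.range r,
      φ ∘ₗ W.mode (2 * h - i - 2 - n) ((V.endL 1 ^ i) v) = 0 := by
    refine (eventually_all_finset _).2 fun i _ => ?_
    have hmem : (V.endL 1 ^ i) v ∈ truncation φ := hφ ▸ Submodule.mem_top
    exact (tendsto_const_sub_atTop_atBot (2 * h - i - 2)).eventually hmem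
  filter_upwards [hterms] with n hn
  rw [dmode_of_mem_wtSpace hv hr, LinearMap.coe_zero_iff]
  refine Finset.sum_eq_zero fun i hi => ?_
  rw [show 2 * h - n - i - 2 = 2 * h - i - 2 - n by ring, hn i hi, smul_zero]

theorem forall_eventually_dmode_eq_zero_iff :
    (∀ v : V.carrier, ∀ᶠ n in atTop, W.dmode v n φ = 0) ↔ truncation φ = ⊤ := by
  refine ⟨fun hφ => ?_, fun hφ v => ?_⟩
  · refine top_unique (VOA.iSup_wtSpace.symm.trans_le (iSup_le fun h v hv => ?_))
    obtain ⟨r, hr⟩ := VOA.exists_endL_pow_eq_zero one_pos hv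
    exact mem_truncation_of_endL_pow_eq_zero hφ hv hr
  · have hproj : ∀ᶠ n in atTop, ∀ h ∈ (V.proj_finite v).toFinset,
        W.dmode (V.proj h v) n φ = 0 :=
      (eventually_all_finset _).2 fun h _ =>
        eventually_dmode_eq_zero_of_mem_wtSpace hφ (V.proj_mem h v)
    filter_upwards [hproj] with n hn
    rw [dmode_eq_sum_proj, Finset.sum_eq_zero hn]

end Adjoint

variable (W) in
/-- The functionals `φ` on `W` such that, for every `v ∈ V`, `φ ∘ vₙ = 0` for all sufficiently
negative `n`: the space `D(W)`, described through the modes of `W` rather than their adjoints. -/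
def truncatedDual : Submodule ℂ (Dual ℂ W.carrier) where
  carrier := {φ | truncation φ = ⊤}
  zero_mem' := eq_top_iff.2 fun _ _ => Eventually.of_forall fun _ => LinearMap.zero_comp _
  add_mem' {φ ψ} hφ hψ := eq_top_iff.2 fun v _ => by
    have hv : v ∈ truncation φ ⊓ truncation ψ := by
      rw [hφ, hψ, inf_top_eq]; exact Submodule.mem_top
    filter_upwards [hv.1, hv.2] with n hφn hψn
    rw [LinearMap.add_comp, hφn, hψn, add_zero]
  smul_mem' c φ hφ := eq_top_iff.2 fun v hv => by
    rw [← hφ] at hv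
    filter_upwards [hv] with n hn
    rw [LinearMap.smul_comp, hn, smul_zero]

theorem comp_mode_mem_truncatedDual {φ : Dual ℂ W.carrier} (hφ : φ ∈ W.truncatedDual) (m : ℤ)
    (u : V.carrier) : φ ∘ₗ W.mode m u ∈ W.truncatedDual := by
  have hmem (v : V.carrier) : v ∈ truncation φ := hφ ▸ Submodule.mem_top
  refine eq_top_iff.2 fun v _ => ?_
  obtain ⟨N, hN⟩ := V.trunc u v
  have hterms : ∀ᶠ n : ℤ in atBot, ∀ i ∈ Finset.range N.toNat,
      φ ∘ₗ W.mode (m - i + n) (V.op u i v) = 0 :=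
    (eventually_all_finset _).2 fun i _ =>
      (tendsto_atBot_add_const_left _ (m - i : ℤ) tendsto_id).eventually (hmem (V.op u i v))
  filter_upwards [hterms, hmem v] with n hn hv
  have hlie : φ ∘ₗ ⁅W.mode m u, W.mode n v⁆ = 0 := by
    rw [lie_mode_eq_sum (r := N.toNat) fun i hi => hN i (by omega),
      ← LinearMap.compRight_apply ℂ, map_sum]
    refine Finset.sum_eq_zero fun i hi => ?_
    rw [map_smul, LinearMap.compRight_apply, show m + n - i = m - i + n by ring, hn i hi, smul_zero]
  calc (φ ∘ₗ W.mode m u) ∘ₗ W.mode n v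
      = φ ∘ₗ ⁅W.mode m u, W.mode n v⁆ + (φ ∘ₗ W.mode n v) ∘ₗ W.mode m u := by
        rw [Ring.lie_def, LinearMap.comp_sub, End.mul_eq_comp, End.mul_eq_comp,
          LinearMap.comp_assoc, LinearMap.comp_assoc, sub_add_cancel]
    _ = 0 := by rw [hlie, hv, LinearMap.zero_comp, add_zero]

theorem DW_eq_map_truncatedDual :
    W.DW = W.truncatedDual.map (LinearMap.ltoFun ℂ W.carrier ℂ ℂ) := by
  have hcoe (φ : Dual ℂ W.carrier) : ⇑φ ∈ W.DW ↔ φ ∈ W.truncatedDual := by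
    refine Iff.trans ?_ forall_eventually_dmode_eq_zero_iff
    simp only [DW, Set.mem_ofPred_eq, φ.isLinear, true_and, eventually_atTop, funext_iff,
      Pi.zero_apply]
  ext α
  refine ⟨fun hα => ⟨hα.1.mk', (hcoe hα.1.mk').1 hα, rfl⟩, ?_⟩
  rintro ⟨φ, hφ, rfl⟩
  exact (hcoe φ).2 hφ

theorem dmode_mem_DW {α : W.carrier → ℂ} (hα : α ∈ W.DW) (v : V.carrier) (n : ℤ) :
    W.dmode v n α ∈ W.DW := by
  rw [DW_eq_map_truncatedDual] at hα ⊢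
  obtain ⟨φ, hφ, rfl⟩ := hα
  change W.dmode v n φ ∈ W.truncatedDual.map _
  rw [dmode_eq_sum_proj]
  refine Submodule.sum_mem _ fun h _ => ?_
  have hv := V.proj_mem h v
  obtain ⟨r, hr⟩ := VOA.exists_endL_pow_eq_zero one_pos hv
  rw [dmode_of_mem_wtSpace hv hr]
  exact Submodule.mem_map_of_mem <| Submodule.sum_mem _ fun i _ =>
    Submodule.smul_mem _ _ (comp_mode_mem_truncatedDual hφ _ _)

end WeakModule

/-- `D(W)` is a `g(V)`-submodule of the `g(V)`-module `W*`
(it is a linear subspace stable under all the operators `v*ₙ`), and `D(W)` is a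
restricted `g(V)`-module: for every `v ∈ V` and `α ∈ D(W)`, `v*ₙ α = 0` for `n`
sufficiently large. -/
theorem DW_restricted_gV_submodule (V : VOA) (W : WeakModule V) :
    (∀ α ∈ W.DW, ∀ β ∈ W.DW, α + β ∈ W.DW) ∧
    (∀ c : ℂ, ∀ α ∈ W.DW, c • α ∈ W.DW) ∧
    (∀ α ∈ W.DW, ∀ (v : V.carrier) (n : ℤ), W.dmode v n α ∈ W.DW) ∧
    (∀ α ∈ W.DW, ∀ v : V.carrier, ∃ N : ℤ, ∀ n : ℤ, N ≤ n →
      ∀ w : W.carrier, W.dmode v n α w = 0) := by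
  refine ⟨fun α hα β hβ => ?_, fun c α hα => ?_, fun α hα v n => ?_, fun α hα v => hα.2 v⟩
  · rw [WeakModule.DW_eq_map_truncatedDual] at hα hβ ⊢
    exact add_mem hα hβ
  · rw [WeakModule.DW_eq_map_truncatedDual] at hα ⊢
    exact Submodule.smul_mem _ c hα
  · exact WeakModule.dmode_mem_DW hα v n
end

section
/- Let V be a vertex operator algebra and W an ordinary V-module. Then D(W)⁰ = W′; that is, for each h ∈ ℂ the L(0)-eigenspace D(W)_{(h)} of eigenvalue h equals W_{(h)}*, so the sum of the L(0)-eigenspaces of D(W) coincides with the restricted dual W′ = ⊕_{h∈ℂ} W_{(h)}*. -/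
/-!
A linear functional on `W` is an eigenvector of `α ↦ α ∘ L(0)` with eigenvalue `h` exactly when it
vanishes on every weight space `W₍g₎`, `g ≠ h`. Such a functional automatically lies in `D(W)`: if
`v` is homogeneous of weight `k`, every term of `v*ₙ α` composes `α` with an operator on `W` raising
weights by `n + 1 - k`, so it only sees `W₍h+k-n-1₎`, which is zero once `n` is large. Hence
`D(W)₍h₎ = W₍h₎*`, and both sides of the theorem consist of the finite sums of such functionals.
-/

theorem isLinearMap_sum {R M N ι : Type*} [Semiring R] [AddCommMonoid M] [Module R M]
    [AddCommMonoid N] [Module R N] {S : Finset ι} {f : ι → M → N}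
    (hf : ∀ i ∈ S, IsLinearMap R (f i)) : IsLinearMap R (∑ i ∈ S, f i) :=
  Finset.sum_induction f (IsLinearMap R) (fun a b ha hb => (ha.mk' a + hb.mk' b).isLinear)
    (0 : M →ₗ[R] N).isLinear hf

namespace VOA

variable (V : VOA)

theorem L_mem_wtSpace (m : ℤ) {k : ℤ} {v : V.carrier} (hv : v ∈ V.wtSpace k) :
    V.L m v ∈ V.wtSpace (k - m) := by
  have hmem := V.op_wt 2 k (m + 1) V.omega V.omega_wt v hv
  rwa [show 2 + k - (m + 1) - 1 = k - m by ring] at hmem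

theorem iterate_L_mem_wtSpace (m : ℤ) {k : ℤ} {v : V.carrier} (hv : v ∈ V.wtSpace k) (i : ℕ) :
    (V.L m)^[i] v ∈ V.wtSpace (k - i * m) := by
  induction i with
  | zero => simpa using hv
  | succ i ih =>
    rw [Function.iterate_succ_apply', show k - (i + 1 : ℕ) * m = k - i * m - m by push_cast; ring]
    exact V.L_mem_wtSpace m ih

theorem iterate_L_map_zero (m : ℤ) (i : ℕ) : (V.L m)^[i] 0 = 0 :=
  Function.iterate_fixed (V.op_linear_right V.omega (m + 1)).map_zero i

end VOA

namespace WeakModule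

variable {V : VOA} (W : WeakModule V)

/-- The eigenspace `D(W)₍h₎` of `L*(0)` on `D(W)`, as a set of functions on `W`; as in
`OrdModule.DW0`, the operator `L*(0)` is written out as `α ↦ α ∘ L(0)`. -/
def DWEig (h : ℂ) : Set (W.carrier → ℂ) :=
  {α | α ∈ W.DW ∧ ∀ w : W.carrier, α (W.op V.omega 1 w) = h * α w}

/-- The space `D(W)⁰` of finite sums of `L*(0)`-eigenvectors in `D(W)`, for an arbitrary weak
module; on ordinary modules it unfolds to `OrdModule.DW0`. -/
def DWEigSum : Set (W.carrier → ℂ) :=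
  {α | ∃ (S : Finset ℂ) (f : ℂ → W.carrier → ℂ), (∀ h ∈ S, f h ∈ W.DWEig h) ∧ α = ∑ h ∈ S, f h}

theorem L0_apply (w : W.carrier) : W.L0 w = W.op V.omega 1 w :=
  rfl

end WeakModule

namespace GenModule

variable {V : VOA} (W : GenModule V)

/-- The projection of `W` onto the weight space `W₍h₎`, bundled as a linear endomorphism. -/
def weightProj (h : ℂ) : Module.End ℂ W.carrier :=
  (W.projW_linear h).mk' (W.projW h)

/-- The dual `W₍h₎*`, realised inside `W*` as the functionals that vanish on all the other weight
spaces. Like `restrictedDual`, it is a set of functions on `W`. -/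
def weightDual (h : ℂ) : Set (W.carrier → ℂ) :=
  {α | IsLinearMap ℂ α ∧ ∀ g ≠ h, ∀ w ∈ W.wt g, α w = 0}

variable {W} {h : ℂ}

theorem weightProj_of_mem {w : W.carrier} (hw : w ∈ W.wt h) : W.weightProj h w = w :=
  W.projW_eq h w hw

theorem weightProj_of_mem_of_ne {g : ℂ} (hgh : g ≠ h) {w : W.carrier} (hw : w ∈ W.wt g) :
    W.weightProj h w = 0 :=
  W.projW_ne g h hgh w hw

theorem linearMap_ext {M : Type*} [AddCommMonoid M] [Module ℂ M] {φ ψ : W.carrier →ₗ[ℂ] M}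
    (hφψ : ∀ g, ∀ w ∈ W.wt g, φ w = ψ w) : φ = ψ := by
  ext w
  rw [← W.projW_sum w, finsum_eq_sum _ (W.projW_finite w), map_sum, map_sum]
  exact Finset.sum_congr rfl fun g _ => hφψ g _ (W.projW_mem g w)

theorem comp_L0_eq_smul_iff {φ : Module.Dual ℂ W.carrier} :
    φ ∘ₗ W.L0 = h • φ ↔ ∀ g ≠ h, ∀ w ∈ W.wt g, φ w = 0 := by
  have apply_comp_L0 {g : ℂ} {w : W.carrier} (hw : w ∈ W.wt g) :
      (φ ∘ₗ W.L0) w = g • φ w := by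
    rw [LinearMap.comp_apply, WeakModule.L0_apply, W.wt_L0 g w hw, map_smul]
  constructor
  · intro heig g hgh w hw
    have hgφ : g • φ w = h • φ w := by rw [← apply_comp_L0 hw, heig, LinearMap.smul_apply]
    exact (mul_eq_mul_right_iff.1 hgφ).resolve_left hgh
  · intro hφ
    refine linearMap_ext fun g w hw => ?_
    rw [apply_comp_L0 hw, LinearMap.smul_apply]
    obtain rfl | hgh := eq_or_ne g h
    · rfl
    · rw [hφ g hgh w hw, smul_zero, smul_zero]

theorem apply_op_eq_zero_of_mem_weightDual {α : W.carrier → ℂ} (hα : α ∈ W.weightDual h)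
    {k n : ℤ} {u : V.carrier} (hu : u ∈ V.wtSpace k) (hbot : W.wt (h - k + n + 1) = ⊥)
    (w : W.carrier) : α (W.op u n w) = 0 := by
  obtain ⟨hlin, hvanish⟩ := hα
  suffices hlin.mk' α ∘ₗ (W.op_linear_right u n).mk' (W.op u n) = 0 from LinearMap.congr_fun this w
  refine linearMap_ext fun g w hw => ?_
  change α (W.op u n w) = 0
  by_cases hg : g + k - n - 1 = h
  · have hw0 : w = 0 := by
      rwa [show g = h - k + n + 1 by rw [← hg]; ring, hbot, Submodule.mem_bot] at hw
    rw [hw0, (W.op_linear_right u n).map_zero, hlin.map_zero]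
  · exact hvanish _ hg _ (W.wt_op k u hu g n w hw)

theorem mem_DW_of_mem_weightDual (hbot : ∃ N : ℤ, ∀ m : ℤ, m ≤ N → W.wt (h + m) = ⊥)
    {α : W.carrier → ℂ} (hα : α ∈ W.weightDual h) : α ∈ W.DW := by
  refine ⟨hα.1, fun v => ?_⟩
  obtain ⟨N, hN⟩ := hbot
  obtain ⟨B, hB⟩ := (V.proj_finite v).bddAbove
  refine ⟨B - 1 - N, fun n hn w => ?_⟩
  refine finsum_eq_zero_of_forall_eq_zero fun k => finsum_eq_zero_of_forall_eq_zero fun i =>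
    mul_eq_zero_of_right _ ?_
  by_cases hk : V.proj k v = 0
  · rw [hk, V.iterate_L_map_zero, (W.op_linear_left _ w).map_zero, hα.1.map_zero]
  · have hkB : k ≤ B := hB hk
    refine apply_op_eq_zero_of_mem_weightDual hα
      (V.iterate_L_mem_wtSpace 1 (V.proj_mem k v) i) ?_ w
    have hwt := hN (k - n - 1) (by omega)
    convert hwt using 2
    push_cast
    ring

theorem DWEig_eq_weightDual (hbot : ∃ N : ℤ, ∀ m : ℤ, m ≤ N → W.wt (h + m) = ⊥) :
    W.DWEig h = W.weightDual h := by
  ext α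
  constructor
  · rintro ⟨⟨hlin, -⟩, heig⟩
    exact ⟨hlin, (comp_L0_eq_smul_iff (φ := hlin.mk' α)).1 (LinearMap.ext heig)⟩
  · intro hα
    exact ⟨mem_DW_of_mem_weightDual hbot hα,
      LinearMap.congr_fun ((comp_L0_eq_smul_iff (φ := hα.1.mk' α)).2 hα.2)⟩

theorem comp_weightProj_mem_weightDual (φ : Module.Dual ℂ W.carrier) (h : ℂ) :
    ⇑(φ ∘ₗ W.weightProj h) ∈ W.weightDual h := by
  refine ⟨LinearMap.isLinear _, fun g hgh w hw => ?_⟩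
  rw [LinearMap.comp_apply, weightProj_of_mem_of_ne hgh hw, map_zero]

theorem eq_sum_comp_weightProj {φ : Module.Dual ℂ W.carrier} {S : Finset ℂ}
    (hS : ∀ g ∉ S, ∀ w ∈ W.wt g, φ w = 0) : φ = ∑ h ∈ S, φ ∘ₗ W.weightProj h := by
  refine linearMap_ext fun g w hw => ?_
  rw [LinearMap.sum_apply, Finset.sum_eq_single g]
  · rw [LinearMap.comp_apply, weightProj_of_mem hw]
  · intro h _ hhg
    rw [LinearMap.comp_apply, weightProj_of_mem_of_ne hhg.symm hw, map_zero]
  · intro hg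
    rw [LinearMap.comp_apply, weightProj_of_mem hw, hS g hg w hw]

theorem sum_mem_restrictedDual {S : Finset ℂ} {f : ℂ → W.carrier → ℂ}
    (hf : ∀ h ∈ S, f h ∈ W.weightDual h) : ∑ h ∈ S, f h ∈ W.restrictedDual := by
  refine ⟨isLinearMap_sum fun h hh => (hf h hh).1, S.finite_toSet.subset ?_⟩
  rintro g ⟨w, hw, hne⟩
  rw [Finset.sum_apply] at hne
  obtain ⟨h, hh, hfw⟩ := Finset.exists_ne_zero_of_sum_ne_zero hne
  obtain rfl : g = h := by_contra fun hgh => hfw ((hf h hh).2 g hgh w hw)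
  exact hh

theorem mem_restrictedDual_iff_exists_sum {α : W.carrier → ℂ} :
    α ∈ W.restrictedDual ↔ ∃ (S : Finset ℂ) (f : ℂ → W.carrier → ℂ),
      (∀ h ∈ S, f h ∈ W.weightDual h) ∧ α = ∑ h ∈ S, f h := by
  constructor
  · rintro ⟨hlin, hfin⟩
    obtain ⟨φ, rfl⟩ : ∃ φ : Module.Dual ℂ W.carrier, ⇑φ = α := ⟨hlin.mk' α, rfl⟩
    have hvanish : ∀ g ∉ hfin.toFinset, ∀ w ∈ W.wt g, φ w = 0 := fun g hg w hw =>
      by_contra fun hne => hg (hfin.mem_toFinset.2 ⟨w, hw, hne⟩)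
    refine ⟨hfin.toFinset, fun h => φ ∘ₗ W.weightProj h,
      fun h _ => comp_weightProj_mem_weightDual φ h, ?_⟩
    rw [← LinearMap.coe_sum, ← eq_sum_comp_weightProj hvanish]
  · rintro ⟨S, f, hf, rfl⟩
    exact sum_mem_restrictedDual hf

end GenModule

theorem DW0_eq_restricted_dual_general {V : VOA} (W : GenModule V)
    (hbot : ∀ h : ℂ, ∃ N : ℤ, ∀ m : ℤ, m ≤ N → W.wt (h + m) = ⊥) :
    W.DWEigSum = W.restrictedDual := by
  ext α
  simp only [WeakModule.DWEigSum, Set.mem_ofPred_eq, GenModule.DWEig_eq_weightDual (hbot _),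
    GenModule.mem_restrictedDual_iff_exists_sum]

/-- For an ordinary `V`-module `W`, `D(W)⁰ = W'`: the sum of the
`L(0)`-eigenspaces of the weak module `D(W) ⊆ W*` equals the restricted dual
`W' = ⊕_{h∈ℂ} W₍ₕ₎*`. -/
theorem DW0_eq_restricted_dual (V : VOA) (W : OrdModule V) :
    W.DW0 = W.toGenModule.restrictedDual :=
  DW0_eq_restricted_dual_general W.toGenModule W.wt_lower
end
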